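/- (Refined PAC-Bayesian bound for 1-NN with the sparsity prior; Theorem 4 of the paper, stated via the prior-mass condition its proof establishes.) For every sample size m ≥ 1, every sparsity value S ∈ [0,1) chosen a priori, and every δ ∈ (0,1], with μ^{⊗m}-probability at least 1−δ over the draw of the sample z ∈ Z^m, the following holds: for every hypothesis h ∈ H that is consistent with z and every integer r with 0 ≤ r ≤ m, if P_H(h) ≥ (1−S)^{m−r}·(1+S)^r/(2^m·(1−S^m)), then R(h) ≤ (m·log(2/(1−S)) + r·log((1−S)/(1+S)) + log(1/δ))/m. -/

import Mathlib

open MeasureTheory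

/-!
A hypothesis of true risk `ρ` is consistent with `m` independent examples with probability at most
`exp (-mρ)`. Granting each hypothesis `h` the failure probability `δ P(h)`, a union bound over the
hypotheses of positive prior mass, of which there are only countably many, shows that outside an
event of probability at most `δ` every consistent `h` has `m R(h) ≤ log (1 / (δ P(h)))`. The lower
bound on `P(h)` given by the sparsity prior turns `log (1 / P(h))` into the claimed expression, up
to the discarded normalizer `log (1 - S ^ m) ≤ 0`.
-/

theorem measureReal_biUnion_support_le_tsum {Ω ι : Type*} [MeasurableSpace Ω] {μ : Measure Ω}
    [IsFiniteMeasure μ] {s : ι → Set Ω} {b : ι → ℝ} (hb : Summable b)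
    (hs : ∀ i ∈ b.support, μ.real (s i) ≤ b i) :
    μ.real (⋃ i ∈ b.support, s i) ≤ ∑' i, b i := by
  have hb0 (i : ι) : 0 ≤ b i := by
    by_cases hi : i ∈ b.support
    · exact measureReal_nonneg.trans (hs i hi)
    · exact (Function.notMem_support.1 hi).ge
  refine ENNReal.toReal_le_of_le_ofReal (tsum_nonneg hb0) ?_
  calc μ (⋃ i ∈ b.support, s i)
      ≤ ∑' i : b.support, μ (s i) := measure_biUnion_le μ hb.countable_support s
    _ ≤ ∑' i : b.support, ENNReal.ofReal (b i) :=
        ENNReal.tsum_le_tsum fun i => by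
          rw [← ofReal_measureReal]
          exact ENNReal.ofReal_le_ofReal (hs i i.2)
    _ ≤ ∑' i, ENNReal.ofReal (b i) :=
        ENNReal.tsum_comp_le_tsum_of_injective Subtype.val_injective _
    _ = ENNReal.ofReal (∑' i, b i) := (ENNReal.ofReal_tsum_of_nonneg hb0 hb).symm

section IndependentSample

variable {ι : Type*} [Fintype ι] {Z : ι → Type*} [∀ i, MeasurableSpace (Z i)]
  (μ : ∀ i, Measure (Z i)) [∀ i, IsProbabilityMeasure (μ i)]

theorem measureReal_pi_forall_notMem_le_exp {A : ∀ i, Set (Z i)}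
    (hA : ∀ i, NullMeasurableSet (A i) (μ i)) :
    (Measure.pi μ).real {z | ∀ i, z i ∉ A i} ≤ Real.exp (-∑ i, (μ i).real (A i)) := by
  have hpi : {z : ∀ i, Z i | ∀ i, z i ∉ A i} = Set.univ.pi fun i => (A i)ᶜ := by
    ext z
    simp
  calc (Measure.pi μ).real {z | ∀ i, z i ∉ A i}
      = ∏ i, (μ i).real (A i)ᶜ := by
        simp only [hpi, measureReal_def, Measure.pi_pi, ENNReal.toReal_prod]
    _ = ∏ i, (1 - (μ i).real (A i)) :=
        Finset.prod_congr rfl fun i _ => probReal_compl_eq_one_sub₀ (hA i)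
    _ ≤ ∏ i, Real.exp (-(μ i).real (A i)) :=
        Finset.prod_le_prod (fun _ _ => sub_nonneg.2 measureReal_le_one)
          fun _ _ => Real.one_sub_le_exp_neg _
    _ = Real.exp (-∑ i, (μ i).real (A i)) := by
        rw [← Real.exp_sum, Finset.sum_neg_distrib]

theorem measureReal_pi_forall_notMem_and_log_lt_le {A : ∀ i, Set (Z i)}
    (hA : ∀ i, NullMeasurableSet (A i) (μ i)) {p : ℝ} (hp : 0 < p) :
    (Measure.pi μ).real
      {z | (∀ i, z i ∉ A i) ∧ Real.log (1 / p) < ∑ i, (μ i).real (A i)} ≤ p := by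
  by_cases hlt : Real.log (1 / p) < ∑ i, (μ i).real (A i)
  · calc (Measure.pi μ).real
          {z | (∀ i, z i ∉ A i) ∧ Real.log (1 / p) < ∑ i, (μ i).real (A i)}
        ≤ (Measure.pi μ).real {z | ∀ i, z i ∉ A i} := measureReal_mono fun _ hz => hz.1
      _ ≤ Real.exp (-∑ i, (μ i).real (A i)) := measureReal_pi_forall_notMem_le_exp μ hA
      _ ≤ Real.exp (-Real.log (1 / p)) := Real.exp_le_exp.2 (neg_le_neg hlt.le)
      _ = p := by rw [one_div, Real.log_inv, neg_neg, Real.exp_log hp]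
  · simpa only [hlt, and_false, Set.ofPred_false, measureReal_empty] using hp.le

theorem pac_bayes_sum_le_log_of_consistent {H : Type*} {P : H → ℝ}
    (hP0 : ∀ h, 0 ≤ P h) (hP : Summable P) (hP1 : ∑' h, P h ≤ 1)
    {E : H → ∀ i, Set (Z i)} (hE : ∀ h i, NullMeasurableSet (E h i) (μ i))
    {δ : ℝ} (hδ : 0 < δ) :
    1 - δ ≤ (Measure.pi μ).real
      {z | ∀ h, 0 < P h → (∀ i, z i ∉ E h i) →
        ∑ i, (μ i).real (E h i) ≤ Real.log (1 / (δ * P h))} := by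
  set good := {z : ∀ i, Z i | ∀ h, 0 < P h → (∀ i, z i ∉ E h i) →
    ∑ i, (μ i).real (E h i) ≤ Real.log (1 / (δ * P h))}
  let b : H → ℝ := fun h => δ * P h
  let bad : H → Set (∀ i, Z i) := fun h =>
    {z | (∀ i, z i ∉ E h i) ∧ Real.log (1 / b h) < ∑ i, (μ i).real (E h i)}
  have hgood_compl_subset : goodᶜ ⊆ ⋃ h ∈ b.support, bad h := by
    intro z hz
    simp only [good, Set.mem_compl_iff, Set.mem_ofPred_eq, not_forall, not_le] at hz
    obtain ⟨h, hPh, hcons, hlt⟩ := hz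
    exact Set.mem_biUnion (Function.mem_support.2 (mul_pos hδ hPh).ne') ⟨hcons, hlt⟩
  have hbad (h : H) (hh : h ∈ b.support) : (Measure.pi μ).real (bad h) ≤ b h :=
    measureReal_pi_forall_notMem_and_log_lt_le μ (hE h)
      ((mul_nonneg hδ.le (hP0 h)).lt_of_ne' hh)
  have hgood_compl_le : (Measure.pi μ).real goodᶜ ≤ δ :=
    calc (Measure.pi μ).real goodᶜ
        ≤ (Measure.pi μ).real (⋃ h ∈ b.support, bad h) :=
          measureReal_mono hgood_compl_subset (measure_ne_top _ _)
      _ ≤ ∑' h, δ * P h := measureReal_biUnion_support_le_tsum (hP.mul_left δ) hbad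
      _ = δ * ∑' h, P h := tsum_mul_left
      _ ≤ δ := mul_le_of_le_one_right hδ.le hP1
  have hcover : 1 ≤ (Measure.pi μ).real good + (Measure.pi μ).real goodᶜ := by
    simpa using measureReal_union_le (μ := Measure.pi μ) good goodᶜ
  linarith

end IndependentSample

theorem one_sub_pow_pos_of_abs_lt_one {R : Type*} [Ring R] [LinearOrder R] [IsStrictOrderedRing R]
    {x : R} (hx : |x| < 1) {n : ℕ} (hn : n ≠ 0) : 0 < 1 - x ^ n := by
  have h_abs_pow : |x ^ n| < 1 := by
    rw [abs_pow]
    exact pow_lt_one₀ (abs_nonneg x) hx hn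
  exact sub_pos.2 (abs_lt.1 h_abs_pow).2

/-- The lower bound on the mass that the sparsity prior gives to a 1-NN classifier on `m` examples
of which `r` are redundant, namely `((1 - S) / 2) ^ (m - r) * ((1 + S) / 2) ^ r`, conditioned on the
coefficient vector being nonzero. A redundant example contributes `(1 + S) / 2 = S + (1 - S) / 2`
because both the coefficient `0` and one of `±1` give the same classifier. -/
noncomputable def sparsityPriorMass (S : ℝ) (m r : ℕ) : ℝ :=
  (1 - S) ^ (m - r) * (1 + S) ^ r / (2 ^ m * (1 - S ^ m))

section SparsityPriorMass

variable {S : ℝ} {m r : ℕ}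

theorem sparsityPriorMass_pos (hS : |S| < 1) (hm : m ≠ 0) : 0 < sparsityPriorMass S m r := by
  obtain ⟨hS_neg, hS_lt⟩ := abs_lt.1 hS
  have h_add : 0 < 1 + S := by linarith
  have h_pow : 0 < 1 - S ^ m := one_sub_pow_pos_of_abs_lt_one hS hm
  unfold sparsityPriorMass
  positivity

theorem log_one_div_sparsityPriorMass (hS : |S| < 1) (hm : m ≠ 0) (hr : r ≤ m) :
    Real.log (1 / sparsityPriorMass S m r) =
      m * Real.log (2 / (1 - S)) + r * Real.log ((1 - S) / (1 + S)) + Real.log (1 - S ^ m) := by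
  obtain ⟨hS_neg, hS_lt⟩ := abs_lt.1 hS
  have h_sub : 1 - S ≠ 0 := by linarith
  have h_add : 1 + S ≠ 0 := by linarith
  have h_pow : 1 - S ^ m ≠ 0 := (one_sub_pow_pos_of_abs_lt_one hS hm).ne'
  rw [sparsityPriorMass, one_div_div, Real.log_div (by positivity) (by positivity),
    Real.log_mul (by positivity) h_pow, Real.log_mul (by positivity) (by positivity),
    Real.log_div two_ne_zero h_sub, Real.log_div h_sub h_add]
  simp only [Real.log_pow, Nat.cast_sub hr]
  ring

theorem log_one_div_le_of_sparsityPriorMass_le (hS0 : 0 ≤ S) (hS1 : S < 1) (hm : m ≠ 0)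
    (hr : r ≤ m) {p : ℝ} (hp : sparsityPriorMass S m r ≤ p) :
    Real.log (1 / p) ≤ m * Real.log (2 / (1 - S)) + r * Real.log ((1 - S) / (1 + S)) := by
  have hS : |S| < 1 := by rwa [abs_of_nonneg hS0]
  have hmass : 0 < sparsityPriorMass S m r := sparsityPriorMass_pos hS hm
  have hnormalizer : Real.log (1 - S ^ m) ≤ 0 :=
    Real.log_nonpos (sub_nonneg.2 (pow_le_one₀ hS0 hS1.le)) (sub_le_self 1 (pow_nonneg hS0 m))
  calc Real.log (1 / p)
      ≤ Real.log (1 / sparsityPriorMass S m r) :=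
        Real.log_le_log (one_div_pos.2 (hmass.trans_le hp)) (one_div_le_one_div_of_le hmass hp)
    _ = m * Real.log (2 / (1 - S)) + r * Real.log ((1 - S) / (1 + S)) + Real.log (1 - S ^ m) :=
        log_one_div_sparsityPriorMass hS hm hr
    _ ≤ m * Real.log (2 / (1 - S)) + r * Real.log ((1 - S) / (1 + S)) :=
        add_le_of_nonpos_right hnormalizer

end SparsityPriorMass

theorem pac_bayes_one_nn_sparsity_prior_general
    {Z : Type*} [MeasurableSpace Z] (μ : Measure Z) [IsProbabilityMeasure μ]
    {H : Type*} {P : H → ℝ} (hP0 : ∀ h, 0 ≤ P h) (hP : Summable P) (hP1 : ∑' h, P h ≤ 1)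
    {E : H → Set Z} (hE : ∀ h, NullMeasurableSet (E h) μ)
    {m : ℕ} (hm : 1 ≤ m) {S : ℝ} (hS0 : 0 ≤ S) (hS1 : S < 1) {δ : ℝ} (hδ : 0 < δ) :
    1 - δ ≤ (Measure.pi fun _ : Fin m => μ).real
      {z | ∀ h, ∀ r ≤ m, (∀ i, z i ∉ E h) → sparsityPriorMass S m r ≤ P h →
        μ.real (E h) ≤ (m * Real.log (2 / (1 - S)) + r * Real.log ((1 - S) / (1 + S)) +
          Real.log (1 / δ)) / m} := by
  refine (pac_bayes_sum_le_log_of_consistent (fun _ : Fin m => μ) hP0 hP hP1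
    (fun h _ => hE h) hδ).trans (measureReal_mono ?_)
  intro z hz h r hr hcons hmass
  have hm0 : m ≠ 0 := Nat.one_le_iff_ne_zero.1 hm
  have hPh : 0 < P h :=
    (sparsityPriorMass_pos (by rwa [abs_of_nonneg hS0]) hm0).trans_le hmass
  rw [le_div_iff₀' (Nat.cast_pos.2 hm)]
  calc m * μ.real (E h)
      ≤ Real.log (1 / (δ * P h)) := by simpa using hz h hPh hcons
    _ = Real.log (1 / P h) + Real.log (1 / δ) := by
        rw [← Real.log_mul (one_div_pos.2 hPh).ne' (one_div_pos.2 hδ).ne', one_div_mul_one_div_rev]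
    _ ≤ m * Real.log (2 / (1 - S)) + r * Real.log ((1 - S) / (1 + S)) + Real.log (1 / δ) := by
        gcongr
        exact log_one_div_le_of_sparsityPriorMass_le hS0 hS1 hm0 hr hmass

/-- Refined PAC-Bayesian bound for 1-NN with the sparsity prior (Theorem 4), stated via the
prior-mass condition its proof establishes: with probability at least `1 - δ` over the
sample, every hypothesis `h` consistent with the sample whose prior mass is at least
`(1 - S) ^ (m - r) * (1 + S) ^ r / (2 ^ m * (1 - S ^ m))` for some `r ≤ m` satisfies
`R h ≤ (m log (2 / (1 - S)) + r log ((1 - S) / (1 + S)) + log (1 / δ)) / m`. -/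
theorem pac_bayes_one_nn_sparsity_prior
    {Z : Type*} [MeasurableSpace Z] (μ : Measure Z) [IsProbabilityMeasure μ]
    {H : Type*} [Countable H]
    (P : H → ℝ) (hP0 : ∀ h, 0 ≤ P h) (hP1 : ∑' h : H, P h = 1)
    (E : H → Set Z) (hE : ∀ h, MeasurableSet (E h))
    (m : ℕ) (hm : 1 ≤ m) (S : ℝ) (hS0 : 0 ≤ S) (hS1 : S < 1)
    (δ : ℝ) (hδ0 : 0 < δ) (hδ1 : δ ≤ 1) :
    1 - δ ≤
      ((Measure.pi fun _ : Fin m => μ)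
        {z : Fin m → Z | ∀ h : H, ∀ r : ℕ, r ≤ m → (∀ i, z i ∉ E h) →
          ((1 - S) ^ (m - r) * (1 + S) ^ r / (2 ^ m * (1 - S ^ m)) : ℝ) ≤ P h →
          (μ (E h)).toReal ≤
            (m * Real.log (2 / (1 - S)) + r * Real.log ((1 - S) / (1 + S)) +
              Real.log (1 / δ)) / m}).toReal := by
  have hP : Summable P := by
    by_contra h_not_summable
    simp [tsum_eq_zero_of_not_summable h_not_summable] at hP1
  exact pac_bayes_one_nn_sparsity_prior_general μ hP0 hP hP1.le
    (fun h => (hE h).nullMeasurableSet) hm hS0 hS1 hδ0
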